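/- Let x ∈ B^n have MSA orbit defined for all times, and suppose the MSA expansion of x is eventually periodic: there exist m ≥ 0 and p ≥ 1 with S^{m+p} x = S^m x. Then for every column index g ∈ {0,…,n} and every i ∈ {1,…,n}, the ratio (β^{(s)})_{i,g} / (β^{(s)})_{0,g} converges to x_i as s → ∞; i.e. the periodic multiplicative Selmer algorithm is uniformly weakly convergent. -/

import Mathlib

open Matrix Filter

/-- Entry access with junk value `0` outside the index range: `ent x m = x_{m+1}`
(0-based coordinate `m`) for `m < n`, and `0` otherwise. -/
noncomputable def ent {n : ℕ} (x : Fin n → ℝ) (m : ℕ) : ℝ :=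
  if h : m < n then x ⟨m, h⟩ else 0

/-- `B^n = {x ∈ ℝ^n : 1 ≥ x₁ ≥ x₂ ≥ ⋯ ≥ x_n ≥ 0}` (the stated antitonicity of
the `0`-extended sequence `ent x` encodes both the ordering and `x_n ≥ 0`). -/
def Bset (n : ℕ) : Set (Fin n → ℝ) :=
  {x | ent x 0 ≤ 1 ∧ ∀ i j : ℕ, i ≤ j → ent x j ≤ ent x i}

/-- The MSA digit `k = ⌊1/x_n⌋`. -/
noncomputable def msaDigit {n : ℕ} (x : Fin n → ℝ) : ℤ :=
  ⌊(ent x (n - 1))⁻¹⌋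

/-- The multiplicative Selmer algorithm (MSA) map
`S(x₁,…,x_n) = (x₂/x₁, …, x_n/x₁, (1 − k·x_n)/x₁)` with `k = ⌊1/x_n⌋`. -/
noncomputable def msaS {n : ℕ} (x : Fin n → ℝ) : Fin n → ℝ := fun i =>
  if (i : ℕ) + 1 < n then ent x ((i : ℕ) + 1) / ent x 0
  else (1 - (msaDigit x : ℝ) * ent x (n - 1)) / ent x 0

/-- The Selmer matrix `β(k)`: the `(n+1)×(n+1)` real matrix (rows and columns indexed by
`0,…,n`) whose only nonzero entries are `β(k)_{0,n−1} = k`, `β(k)_{0,n} = 1`, and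
`β(k)_{i,i−1} = 1` for `1 ≤ i ≤ n`. -/
noncomputable def selmerBeta (n : ℕ) (k : ℤ) : Matrix (Fin (n + 1)) (Fin (n + 1)) ℝ :=
  Matrix.of fun i j =>
    if (i : ℕ) = 0 ∧ (j : ℕ) = n - 1 then (k : ℝ)
    else if (i : ℕ) = 0 ∧ (j : ℕ) = n then 1
    else if (j : ℕ) + 1 = (i : ℕ) then 1 else 0

/-- `β^{(s)} = β(k₁)β(k₂)⋯β(k_s)` for the MSA digits `k_s = ⌊1/(S^{s−1}x)_n⌋` of `x`
(with `β^{(0)}` the identity matrix). -/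
noncomputable def msaBeta (n : ℕ) (x : Fin n → ℝ) (s : ℕ) :
    Matrix (Fin (n + 1)) (Fin (n + 1)) ℝ :=
  ((List.range s).map fun t => selmerBeta n (msaDigit (msaS^[t] x))).prod

lemma msaBeta_succ (n : ℕ) (x : Fin n → ℝ) (s : ℕ) :
    msaBeta n x (s + 1) = msaBeta n x s * selmerBeta n (msaDigit (msaS^[s] x)) := by
  simp [msaBeta, List.range_succ]

lemma msaBeta_zero (n : ℕ) (x : Fin n → ℝ) : msaBeta n x 0 = 1 := by
  simp [msaBeta]

lemma msaBeta_add (n : ℕ) (x : Fin n → ℝ) (s t : ℕ) :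
    msaBeta n x (s + t) = msaBeta n x s * msaBeta n (msaS^[s] x) t := by
  induction t with
  | zero => simp [msaBeta_zero]
  | succ t ih =>
    rw [← add_assoc, msaBeta_succ, ih, msaBeta_succ, Matrix.mul_assoc,
      ← Function.iterate_add_apply, add_comm t s]

lemma selmer_row_zero (n : ℕ) (hn : 1 ≤ n) (k : ℤ) (j : Fin (n + 1)) :
    selmerBeta n k 0 j = (if j = (⟨n - 1, by omega⟩ : Fin (n + 1)) then (k : ℝ) else 0)
      + (if j = Fin.last n then 1 else 0) := by
  have : n - 1 ≠ n := by omega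
  simp only [selmerBeta, Matrix.of_apply, Fin.ext_iff, Fin.val_last, Fin.val_zero]
  split_ifs <;> first | omega | simp_all

lemma selmer_row_succ (n : ℕ) (k : ℤ) (i : Fin n) (j : Fin (n + 1)) :
    selmerBeta n k i.succ j = if j = i.castSucc then 1 else 0 := by
  simp only [selmerBeta, Matrix.of_apply, Fin.ext_iff, Fin.val_succ, Fin.val_castSucc]
  rw [if_neg (by omega), if_neg (by omega)]
  split_ifs <;> first | omega | rfl

lemma selmer_mono (n : ℕ) (hn : 1 ≤ n) (k : ℤ) (hk : 1 ≤ k) (i j : Fin (n + 1)) :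
    selmerBeta n 1 i j ≤ selmerBeta n k i j := by
  have hk' : (1 : ℝ) ≤ k := by exact_mod_cast hk
  refine Fin.cases ?_ (fun i => ?_) i
  · rw [selmer_row_zero n hn, selmer_row_zero n hn]
    split_ifs <;> simp [hk']
  · rw [selmer_row_succ, selmer_row_succ]

lemma selmer_nonneg (n : ℕ) (i j : Fin (n + 1)) : 0 ≤ selmerBeta n 1 i j := by
  simp only [selmerBeta, Matrix.of_apply]
  split_ifs <;> simp

lemma pow_nonneg_entry (n : ℕ) (L : ℕ) (i j : Fin (n + 1)) :
    0 ≤ (selmerBeta n 1 ^ L) i j := by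
  induction L generalizing i j with
  | zero => simp only [pow_zero, Matrix.one_apply]; split_ifs <;> simp
  | succ L ih =>
    rw [pow_succ, Matrix.mul_apply]
    exact Finset.sum_nonneg fun l _ => mul_nonneg (ih _ _) (selmer_nonneg _ _ _)

lemma pow_trans_entry (n a b : ℕ) (i j l : Fin (n + 1))
    (h1 : 1 ≤ (selmerBeta n 1 ^ a) i j) (h2 : 1 ≤ (selmerBeta n 1 ^ b) j l) :
    1 ≤ (selmerBeta n 1 ^ (a + b)) i l := by
  rw [pow_add, Matrix.mul_apply]
  have h := Finset.single_le_sum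
    (f := fun c => (selmerBeta n 1 ^ a) i c * (selmerBeta n 1 ^ b) c l)
    (fun c _ => mul_nonneg (pow_nonneg_entry n a i c) (pow_nonneg_entry n b c l))
    (Finset.mem_univ j)
  refine le_trans ?_ h
  exact one_le_mul_of_one_le_of_one_le h1 h2

lemma pow_down (n : ℕ) (d : ℕ) (i j : Fin (n + 1)) (h : (i : ℕ) = j + d) :
    1 ≤ (selmerBeta n 1 ^ d) i j := by
  induction d generalizing i with
  | zero =>
    have : i = j := Fin.ext (by simpa using h)
    simp [this]
  | succ d ih =>
    have hi : 1 ≤ (i : ℕ) := by omega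
    have := pow_trans_entry n 1 d i ⟨i - 1, by omega⟩ j (by
      rw [pow_one]
      simp only [selmerBeta, Matrix.of_apply]
      rw [if_neg (by omega), if_neg (by omega), if_pos (by omega)]) (ih _ (by simp; omega))
    rwa [add_comm 1 d] at this

lemma pow_zero_to (n : ℕ) (hn : 1 ≤ n) (j : Fin (n + 1)) :
    1 ≤ (selmerBeta n 1 ^ (1 + (n - j))) 0 j := by
  refine pow_trans_entry n 1 (n - j) 0 (Fin.last n) j ?_ (pow_down _ _ _ _ ?_)
  · rw [pow_one, selmer_row_zero n hn]
    simp only [if_true]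
    split_ifs <;> simp
  · simp; omega

lemma pow_loop_n (n : ℕ) (hn : 1 ≤ n) : 1 ≤ (selmerBeta n 1 ^ n) 0 0 := by
  have := pow_trans_entry n 1 (n - 1) 0 ⟨n - 1, by omega⟩ 0 (by
    rw [pow_one, selmer_row_zero n hn]
    simp only [if_true]
    split_ifs <;> simp) (pow_down _ _ _ _ (by simp))
  rwa [show 1 + (n - 1) = n by omega] at this

lemma pow_loop_mul (n c a : ℕ) (h : 1 ≤ (selmerBeta n 1 ^ c) 0 0) :
    1 ≤ (selmerBeta n 1 ^ (c * a)) 0 0 := by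
  induction a with
  | zero => simp
  | succ a ih => rw [mul_add, mul_one]; exact pow_trans_entry _ _ _ _ _ _ ih h

lemma pow_loop (n : ℕ) (hn : 1 ≤ n) (M : ℕ) (hM : n * n ≤ M) :
    1 ≤ (selmerBeta n 1 ^ M) 0 0 := by
  have h1 : M % n < n := Nat.mod_lt _ (by omega)
  have h2 : n ≤ M / n := (Nat.le_div_iff_mul_le (by omega)).2 hM
  obtain ⟨a, ha⟩ : ∃ a, M / n = a + M % n := ⟨M / n - M % n, by omega⟩
  have h3 : n * (M / n) + M % n = M := Nat.div_add_mod M n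
  have h4 : M = n * a + (1 + n) * (M % n) := by
    calc M = n * (M / n) + M % n := h3.symm
      _ = n * (a + M % n) + M % n := by rw [ha]
      _ = _ := by ring
  rw [h4]
  refine pow_trans_entry _ _ _ _ 0 _ (pow_loop_mul _ _ _ (pow_loop_n n hn))
    (pow_loop_mul _ _ _ ?_)
  simpa using pow_zero_to n hn 0

lemma pow_pos_entry (n : ℕ) (hn : 1 ≤ n) (L : ℕ) (hL : n * n + 2 * n + 1 ≤ L)
    (i j : Fin (n + 1)) : 1 ≤ (selmerBeta n 1 ^ L) i j := by
  have h1 := pow_down n i i 0 (by simp)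
  have h2 := pow_zero_to n hn j
  have hi := i.is_lt
  have h3 := pow_loop n hn (L - i - (1 + (n - j))) (by omega)
  have := pow_trans_entry _ _ _ _ _ _ (pow_trans_entry _ _ _ _ _ _ h1 h3) h2
  rwa [show (i : ℕ) + (L - i - (1 + (n - j))) + (1 + (n - j)) = L by omega] at this

lemma msaBeta_ge (n : ℕ) (hn : 1 ≤ n) (x : Fin n → ℝ)
    (hd : ∀ s, 1 ≤ msaDigit (msaS^[s] x)) (s : ℕ) (i j : Fin (n + 1)) :
    (selmerBeta n 1 ^ s) i j ≤ msaBeta n x s i j := by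
  induction s generalizing i j with
  | zero => simp [msaBeta_zero]
  | succ s ih =>
    rw [pow_succ, msaBeta_succ, Matrix.mul_apply, Matrix.mul_apply]
    refine Finset.sum_le_sum fun l _ => ?_
    exact mul_le_mul (ih _ _) (selmer_mono n hn _ (hd s) _ _) (selmer_nonneg _ _ _)
      ((pow_nonneg_entry _ _ _ _).trans (ih _ _))

lemma ent_lt {n : ℕ} (x : Fin n → ℝ) (m : ℕ) (h : m < n) : ent x m = x ⟨m, h⟩ := by
  simp [ent, h]

lemma digit_one {n : ℕ} (x : Fin n → ℝ) (hx : x ∈ Bset n) (h : 0 < ent x (n - 1)) :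
    1 ≤ msaDigit x := by
  rw [msaDigit, Int.le_floor]
  have : ent x (n - 1) ≤ 1 := (hx.2 0 (n - 1) (Nat.zero_le _)).trans hx.1
  simpa using (one_le_inv₀ h).2 this

lemma digit_bounds {n : ℕ} (x : Fin n → ℝ) (h : 0 < ent x (n - 1)) :
    0 ≤ 1 - (msaDigit x : ℝ) * ent x (n - 1) ∧
    1 - (msaDigit x : ℝ) * ent x (n - 1) ≤ ent x (n - 1) := by
  have h1 : (msaDigit x : ℝ) ≤ (ent x (n - 1))⁻¹ := Int.floor_le _
  have h2 : (ent x (n - 1))⁻¹ < (msaDigit x : ℝ) + 1 := Int.lt_floor_add_one _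
  have h3 := mul_le_mul_of_nonneg_right h1 h.le
  have h4 := mul_le_mul_of_nonneg_right h2.le h.le
  rw [inv_mul_cancel₀ h.ne'] at h3 h4
  constructor <;> linarith

lemma ent_S {n : ℕ} (x : Fin n → ℝ) (m : ℕ) : ent (msaS x) m =
    if m + 1 < n then ent x (m + 1) / ent x 0
    else if m + 1 = n then (1 - (msaDigit x : ℝ) * ent x (n - 1)) / ent x 0 else 0 := by
  unfold ent msaS
  by_cases h : m < n
  · simp only [h, dif_pos]
    by_cases h' : m + 1 < n
    · simp [h', ent]
    · have : m + 1 = n := by omega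
      simp [this, ent]
  · simp only [h]
    have h1 : ¬ (m + 1 < n) := by omega
    have h2 : ¬ (m + 1 = n) := by omega
    simp [h1, h2]

lemma S_mem {n : ℕ} (hn : 1 ≤ n) (x : Fin n → ℝ) (hx : x ∈ Bset n)
    (h : 0 < ent x (n - 1)) : msaS x ∈ Bset n := by
  have h0 : 0 < ent x 0 := h.trans_le (hx.2 0 _ (Nat.zero_le _))
  obtain ⟨hb1, hb2⟩ := digit_bounds x h
  constructor
  · rw [ent_S]
    split_ifs
    · rw [div_le_one h0]; exact hx.2 _ _ (by omega)
    · rw [div_le_one h0]; exact hb2.trans (hx.2 _ _ (by omega))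
    · exact zero_le_one
  · have : Antitone (ent (msaS x)) := by
      refine antitone_nat_of_succ_le fun m => ?_
      rw [ent_S, ent_S]
      split_ifs <;> first | omega | skip
      · exact div_le_div_of_nonneg_right (hx.2 _ _ (by omega)) h0.le
      · refine div_le_div_of_nonneg_right ?_ h0.le
        rwa [show m + 1 = n - 1 by omega]
      · exact div_nonneg hb1 h0.le
      · exact le_rfl
    exact fun i j hij => this hij

/-- The projective vector `(1, x₁, …, x_n)`. -/
def pv {n : ℕ} (x : Fin n → ℝ) : Fin (n + 1) → ℝ := Fin.cons 1 x

lemma pv_eq {n : ℕ} (x : Fin n → ℝ) (j : Fin (n + 1)) :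
    pv x j = if (j : ℕ) = 0 then 1 else ent x (j - 1) := by
  refine Fin.cases ?_ (fun i => ?_) j
  · simp [pv]
  · simp [pv, ent]

lemma step_vec {n : ℕ} (hn : 1 ≤ n) (x : Fin n → ℝ) (h : ent x 0 ≠ 0) :
    selmerBeta n (msaDigit x) *ᵥ pv (msaS x) = (ent x 0)⁻¹ • pv x := by
  ext i
  simp only [Matrix.mulVec, dotProduct, Pi.smul_apply, smul_eq_mul]
  refine Fin.cases ?_ (fun i => ?_) i
  · simp only [selmer_row_zero n hn, add_mul, Finset.sum_add_distrib, ite_mul, zero_mul,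
      Finset.sum_ite_eq', Finset.sum_ite_eq, Finset.mem_univ, if_true]
    rw [pv_eq, pv_eq, pv_eq]
    simp only [Fin.val_last, Fin.val_zero, if_true]
    rw [if_neg (show n ≠ 0 by omega), ent_S x (n - 1),
      if_neg (show ¬ (n - 1 + 1 < n) by omega), if_pos (show n - 1 + 1 = n by omega)]
    by_cases h1 : n = 1
    · subst h1
      simp
      field_simp
      ring
    · rw [if_neg (show ¬ (n - 1 = 0) by omega), ent_S,
        if_pos (show n - 1 - 1 + 1 < n by omega), show n - 1 - 1 + 1 = n - 1 by omega]
      field_simp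
      ring
  · simp only [selmer_row_succ, ite_mul, zero_mul, one_mul,
      Finset.sum_ite_eq', Finset.sum_ite_eq, Finset.mem_univ, if_true]
    rw [pv_eq, pv_eq]
    have hi := i.is_lt
    simp only [Fin.val_castSucc, Fin.val_succ]
    rw [if_neg (show (i : ℕ) + 1 ≠ 0 by omega)]
    by_cases h1 : (i : ℕ) = 0
    · simp [h1, h]
    · rw [if_neg h1, ent_S, if_pos (by omega)]
      rw [show (i : ℕ) - 1 + 1 = i + 1 - 1 by omega, div_eq_inv_mul]

lemma contract {ι : Type*} [Fintype ι] (u q v w : ι → ℝ) (d K : ℝ)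
    (huv : ∑ j, u j * v j = 0) (hq : ∀ j, |u j| ≤ K * q j) (h1 : ∀ j, v j ≤ w j)
    (h2 : ∀ j, d * w j ≤ v j) :
    |∑ j, u j * w j| ≤ (K * (1 - d)) * ∑ j, q j * w j := by
  have e : ∑ j, u j * w j = ∑ j, u j * (w j - v j) := by
    simp only [mul_sub, Finset.sum_sub_distrib, huv, sub_zero]
  rw [e, Finset.mul_sum]
  refine (Finset.abs_sum_le_sum_abs _ _).trans (Finset.sum_le_sum fun j _ => ?_)
  have hw : 0 ≤ w j - v j := sub_nonneg.2 (h1 j)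
  have hK : 0 ≤ K * q j := (abs_nonneg _).trans (hq j)
  rw [abs_mul, abs_of_nonneg hw]
  calc |u j| * (w j - v j) ≤ (K * q j) * (w j - v j) := mul_le_mul_of_nonneg_right (hq j) hw
    _ ≤ (K * q j) * (w j - d * w j) := mul_le_mul_of_nonneg_left (by linarith [h2 j]) hK
    _ = _ := by ring

lemma noncontract {ι : Type*} [Fintype ι] (u q w : ι → ℝ) (K : ℝ)
    (hq : ∀ j, |u j| ≤ K * q j) (h1 : ∀ j, 0 ≤ w j) :
    |∑ j, u j * w j| ≤ K * ∑ j, q j * w j := by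
  simpa using contract u q 0 w 0 K (by simp) hq (by simpa using h1) (by simp)

/-- **Uniform weak convergence of the periodic MSA.** Let `x ∈ B^n` have MSA orbit
defined for all times and suppose its MSA expansion is eventually periodic:
`S^{m+p} x = S^m x` for some `m ≥ 0`, `p ≥ 1`. Then for every column index
`g ∈ {0,…,n}` and every `i ∈ {1,…,n}`,
`(β^{(s)})_{i,g} / (β^{(s)})_{0,g} → x_i` as `s → ∞`. -/
theorem msa_periodic_uniform_weak_convergence (n : ℕ) (hn : 1 ≤ n) (x : Fin n → ℝ)
    (hx : x ∈ Bset n) (horb : ∀ s : ℕ, 0 < ent (msaS^[s] x) (n - 1))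
    (m p : ℕ) (hp : 1 ≤ p) (hper : msaS^[m + p] x = msaS^[m] x) :
    ∀ g : Fin (n + 1), ∀ i : Fin n,
      Tendsto
        (fun s : ℕ => (msaBeta n x s) i.succ g / (msaBeta n x s) 0 g)
        atTop (nhds (x i)) := by
  intro g i
  -- orbit facts
  have hB : ∀ s, msaS^[s] x ∈ Bset n := by
    intro s
    induction s with
    | zero => exact hx
    | succ s ih => rw [Function.iterate_succ_apply']; exact S_mem hn _ ih (horb s)
  have hd : ∀ s, 1 ≤ msaDigit (msaS^[s] x) := fun s => digit_one _ (hB s) (horb s)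
  have hdt : ∀ t s, 1 ≤ msaDigit (msaS^[s] (msaS^[t] x)) := fun t s => by
    rw [← Function.iterate_add_apply]; exact hd _
  have hvec : ∀ s, ∃ c : ℝ, msaBeta n x s *ᵥ pv (msaS^[s] x) = c • pv x := by
    intro s
    induction s with
    | zero => exact ⟨1, by simp [msaBeta_zero]⟩
    | succ s ih =>
      obtain ⟨c, hc⟩ := ih
      have h0 : ent (msaS^[s] x) 0 ≠ 0 :=
        ((horb s).trans_le ((hB s).2 0 _ (Nat.zero_le _))).ne'
      refine ⟨(ent (msaS^[s] x) 0)⁻¹ * c, ?_⟩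
      rw [msaBeta_succ, ← Matrix.mulVec_mulVec, Function.iterate_succ_apply',
        step_vec hn _ h0, Matrix.mulVec_smul, hc, smul_smul]
  -- the aligned block
  set N := n * n + 2 * n + 1 with hN
  set T := p * N with hT
  have hTN : N ≤ T := Nat.le_mul_of_pos_left _ (by omega)
  set y := msaS^[m] x with hy
  have hyp : msaS^[p] y = y := by
    rw [hy, ← Function.iterate_add_apply, add_comm, hper]
  have hyT : msaS^[T] y = y := by
    rw [hT, Function.iterate_mul]
    exact Function.iterate_fixed hyp _
  have hyr : ∀ r, msaS^[m + T * r] x = y := by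
    intro r
    rw [add_comm, Function.iterate_add_apply, ← hy, Function.iterate_mul]
    exact Function.iterate_fixed hyT _
  set Q := msaBeta n y T with hQ
  have hQ1 : ∀ a b, 1 ≤ Q a b := fun a b =>
    (pow_pos_entry n hn T hTN a b).trans (msaBeta_ge n hn y (hdt m) T a b)
  set C := ∑ a, ∑ b, Q a b with hC
  have hQC : ∀ a b, Q a b ≤ C := fun a b => by
    have h1 : Q a b ≤ ∑ b, Q a b := Finset.single_le_sum (f := fun b => Q a b)
      (fun b _ => zero_le_one.trans (hQ1 a b)) (Finset.mem_univ b)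
    exact h1.trans (Finset.single_le_sum (f := fun a => ∑ b, Q a b)
      (fun a _ => Finset.sum_nonneg fun b _ => zero_le_one.trans (hQ1 a b)) (Finset.mem_univ a))
  have hC1 : 1 ≤ C := (hQ1 0 0).trans (hQC 0 0)
  have hc0 : 0 < ent y (n - 1) := horb m
  have hyB : y ∈ Bset n := hB m
  have hc1 : ent y (n - 1) ≤ 1 := (hyB.2 0 _ (Nat.zero_le _)).trans hyB.1
  have hpv : ∀ j, ent y (n - 1) ≤ pv y j ∧ pv y j ≤ 1 := by
    intro j
    rw [pv_eq]
    split_ifs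
    · exact ⟨hc1, le_rfl⟩
    · exact ⟨hyB.2 _ _ (by omega), (hyB.2 0 _ (Nat.zero_le _)).trans hyB.1⟩
  set d := ent y (n - 1) / C with hdd
  have hdpos : 0 < d := by positivity
  have hd1 : d ≤ 1 := (div_le_one (by positivity)).2 (hc1.trans hC1)
  have hdQ : ∀ a b, d * Q a b ≤ pv y a := fun a b => by
    refine le_trans ?_ (hpv a).1
    calc d * Q a b ≤ d * C := mul_le_mul_of_nonneg_left (hQC a b) hdpos.le
      _ = _ := by rw [hdd]; field_simp
  -- deviation and denominators
  let u : ℕ → Fin (n + 1) → ℝ := fun s j => msaBeta n x s i.succ j - x i * msaBeta n x s 0 j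
  let q : ℕ → Fin (n + 1) → ℝ := fun s j => msaBeta n x s 0 j
  have hqpos : ∀ s, N ≤ s → ∀ j, 1 ≤ q s j := fun s hs j =>
    (pow_pos_entry n hn s hs 0 j).trans (msaBeta_ge n hn x hd s 0 j)
  have hqadd : ∀ s t j, q (s + t) j = ∑ l, q s l * msaBeta n (msaS^[s] x) t l j := by
    intro s t j
    simp only [q, msaBeta_add, Matrix.mul_apply]
  have huadd : ∀ s t j, u (s + t) j = ∑ l, u s l * msaBeta n (msaS^[s] x) t l j := by
    intro s t j
    simp only [u, msaBeta_add, Matrix.mul_apply, sub_mul, Finset.sum_sub_distrib,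
      Finset.mul_sum, mul_assoc]
  have huv : ∀ s, ∑ j, u s j * pv (msaS^[s] x) j = 0 := by
    intro s
    obtain ⟨c, hc⟩ := hvec s
    have h1 := congrFun hc i.succ
    have h2 := congrFun hc 0
    simp only [Matrix.mulVec, dotProduct, Pi.smul_apply, smul_eq_mul, pv, Fin.cons_succ,
      Fin.cons_zero] at h1 h2
    simp only [u, sub_mul, Finset.sum_sub_distrib, mul_assoc, ← Finset.mul_sum]
    simp only [pv]
    rw [h1, h2]; ring
  -- initial bound
  obtain ⟨K, hK⟩ : ∃ K : ℝ, ∀ j, |u (m + T * 1) j| ≤ K * q (m + T * 1) j := by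
    refine ⟨∑ j, |u (m + T * 1) j|, fun j => ?_⟩
    have h1 : |u (m + T * 1) j| ≤ ∑ j, |u (m + T * 1) j| :=
      Finset.single_le_sum (f := fun j => |u (m + T * 1) j|)
        (fun _ _ => abs_nonneg _) (Finset.mem_univ j)
    exact h1.trans (le_mul_of_one_le_right ((abs_nonneg _).trans h1) (hqpos _ (by omega) j))
  have hgeo : ∀ r, ∀ j, |u (m + T * (1 + r)) j| ≤ (K * (1 - d) ^ r) * q (m + T * (1 + r)) j := by
    intro r
    induction r with
    | zero => simpa using hK
    | succ r ih =>
      intro j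
      have e : m + T * (1 + (r + 1)) = (m + T * (1 + r)) + T := by ring
      rw [e, huadd, hqadd, hyr, pow_succ, ← mul_assoc]
      refine contract _ _ (pv y) (fun l => Q l j) d _ ?_ ih ?_ ?_
      · have := huv (m + T * (1 + r)); rwa [hyr] at this
      · exact fun l => (hpv l).2.trans (hQ1 l j)
      · exact fun l => hdQ l j
  have hall : ∀ r t j, |u (m + T * (1 + r) + t) j| ≤
      (K * (1 - d) ^ r) * q (m + T * (1 + r) + t) j := by
    intro r t j
    rw [huadd, hqadd]
    exact noncontract _ _ _ _ (hgeo r) fun l =>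
      (pow_nonneg_entry n t l j).trans (msaBeta_ge n hn _ (hdt _) t l j)
  have hlim : Tendsto (fun r : ℕ => K * (1 - d) ^ r) atTop (nhds 0) := by
    simpa using (tendsto_pow_atTop_nhds_zero_of_lt_one (by linarith : 0 ≤ 1 - d)
      (by linarith)).const_mul K
  rw [Metric.tendsto_atTop]
  intro ε hε
  obtain ⟨r, hr⟩ := (hlim.eventually (gt_mem_nhds hε)).exists
  refine ⟨m + T * (1 + r), fun s hs => ?_⟩
  obtain ⟨t, rfl⟩ := Nat.exists_eq_add_of_le hs
  have hq1 : 0 < q (m + T * (1 + r) + t) g := zero_lt_one.trans_le (hqpos _ (by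
    have : T * 1 ≤ T * (1 + r) := Nat.mul_le_mul_left _ (by omega)
    omega) g)
  have e : msaBeta n x (m + T * (1 + r) + t) i.succ g / msaBeta n x (m + T * (1 + r) + t) 0 g
      - x i = u (m + T * (1 + r) + t) g / q (m + T * (1 + r) + t) g := by
    have : msaBeta n x (m + T * (1 + r) + t) 0 g ≠ 0 := hq1.ne'
    simp only [u, q]
    field_simp
  rw [Real.dist_eq, e, abs_div, abs_of_pos hq1]
  exact lt_of_le_of_lt ((div_le_iff₀ hq1).2 (hall r t g)) hr
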